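/- Let n ≥ 2 and 0 < α < 1. Let Ω ⊂ ℝⁿ be a bounded domain with 0 ∈ ∂Ω, with ∂Ω ∈ C^{1,α}(0) (so that in these coordinates the inner unit normal of ∂Ω at 0 is e_n). Let u solve Δu = 1 in Ω∩B₁ with u = 0 and |Du| = 0 on ∂Ω∩B₁ (u continuous on Ω̄∩B₁, twice differentiable in Ω∩B₁, C¹ up to ∂Ω∩B₁), and suppose u ∈ C^{2,α}(0), with P₂ the quadratic polynomial from the definition of C^{2,α}(0). Then P₂(x) = x_n²/2; equivalently u(0) = 0, Du(0) = 0, D²u(0)·e_i·e_j = 0 whenever (i,j) ≠ (n,n), and D²u(0)·e_n·e_n = 1. -/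

import Mathlib

open MvPolynomial Metric Set MeasureTheory Bornology

noncomputable section

/-- `ℝⁿ` with the Euclidean norm. -/
abbrev En (n : ℕ) := EuclideanSpace ℝ (Fin n)

variable {n : ℕ}

/-- Evaluation of a multivariate polynomial at a point of `ℝⁿ`. -/
def peval (P : MvPolynomial (Fin n) ℝ) (x : En n) : ℝ :=
  MvPolynomial.eval (fun i => x i) P

/-- Total degree of a monomial (multi-index). -/
def mdeg (d : Fin n →₀ ℕ) : ℕ := d.sum fun _ e => e

/-- `σ!` for a multi-index `σ`. -/
def mfact (d : Fin n →₀ ℕ) : ℕ := d.prod fun _ e => Nat.factorial e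

/-- The norm `‖P‖ = Σ_σ |a_σ|` of a polynomial `P = Σ_σ (a_σ/σ!) x^σ`. -/
def pnorm (P : MvPolynomial (Fin n) ℝ) : ℝ :=
  ∑ d ∈ P.support, (mfact d : ℝ) * |MvPolynomial.coeff d P|

/-- `|D^i P(0)|`, the Euclidean norm of the `i`-th derivative of `P` at `0`. -/
def derivNorm (i : ℕ) (P : MvPolynomial (Fin n) ℝ) : ℝ :=
  Real.sqrt (∑ d ∈ P.support.filter (fun d => mdeg d = i),
    ((mfact d : ℝ) * MvPolynomial.coeff d P) ^ 2)

/-- Polynomial Laplacian. -/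
def plap (P : MvPolynomial (Fin n) ℝ) : MvPolynomial (Fin n) ℝ :=
  ∑ i, MvPolynomial.pderiv i (MvPolynomial.pderiv i P)

/-- The index of the last coordinate. -/
def lastIdx (n : ℕ) [NeZero n] : Fin n :=
  ⟨n - 1, Nat.sub_lt (Nat.pos_of_ne_zero (NeZero.ne n)) Nat.one_pos⟩

variable [NeZero n]

/-- The last coordinate `x_n`. -/
def xn (x : En n) : ℝ := x (lastIdx n)

/-- `|x′|`, the norm of the first `n-1` coordinates. -/
def xpn (x : En n) : ℝ :=
  Real.sqrt (∑ i ∈ Finset.univ.erase (lastIdx n), (x i) ^ 2)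

/-- Substitution of the polynomial `q` for the last variable `x_n`. -/
def substLast (q P : MvPolynomial (Fin n) ℝ) : MvPolynomial (Fin n) ℝ :=
  MvPolynomial.aeval (fun i => if i = lastIdx n then q else MvPolynomial.X i) P

/-- The pointwise Laplacian of `u` at `x` (sum of pure second derivatives). -/
def lapAt (u : En n → ℝ) (x : En n) : ℝ :=
  ∑ i, fderiv ℝ (fderiv ℝ u) x (EuclideanSpace.single i 1) (EuclideanSpace.single i 1)

/-- `u` is a (classical) solution of `Δu = f` in `Ω ∩ B₁`, `u = g` on `∂Ω ∩ B₁`. -/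
def SolvesDirichlet (Ω : Set (En n)) (u f g : En n → ℝ) : Prop :=
  ContinuousOn u (closure Ω ∩ ball 0 1) ∧
  (∀ x ∈ Ω ∩ ball (0 : En n) 1,
    DifferentiableAt ℝ u x ∧ DifferentiableAt ℝ (fderiv ℝ u) x ∧ lapAt u x = f x) ∧
  (∀ x ∈ frontier Ω ∩ ball (0 : En n) 1, u x = g x)

/-- `u` is a (classical) solution of the oblique derivative problem `Δu = f` in `Ω ∩ B₁`,
`β·Du = g` on `∂Ω ∩ B₁`, with `‖β‖_∞ ≤ 1` and `β·e_n ≥ a₀`; `Du` is the (continuous up to the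
boundary) gradient of `u`. -/
def SolvesOblique (Ω : Set (En n)) (u f g : En n → ℝ) (β Du : En n → En n) (a₀ : ℝ) : Prop :=
  ContinuousOn u (closure Ω ∩ ball 0 1) ∧
  ContinuousOn Du (closure Ω ∩ ball 0 1) ∧
  (∀ x ∈ Ω ∩ ball (0 : En n) 1,
    DifferentiableAt ℝ u x ∧ (∀ i, fderiv ℝ u x (EuclideanSpace.single i 1) = Du x i) ∧
    DifferentiableAt ℝ (fderiv ℝ u) x ∧ lapAt u x = f x) ∧
  (∀ x ∈ frontier Ω ∩ ball (0 : En n) 1,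
    (∑ i, β x i * Du x i) = g x ∧ ‖β x‖ ≤ 1 ∧ a₀ ≤ β x (lastIdx n))

/-- `∂Ω ∈ C^{m,α}(0)` with polynomial `P_Ω = P` and constant `K`. -/
def DomainCmα (m : ℕ) (α K : ℝ) (P : MvPolynomial (Fin n) ℝ) (Ω : Set (En n)) : Prop :=
  P.totalDegree ≤ m ∧ MvPolynomial.coeff 0 P = 0 ∧
  MvPolynomial.pderiv (lastIdx n) P = 0 ∧
  (1 ≤ m → ∀ i, MvPolynomial.coeff (Finsupp.single i 1) P = 0) ∧
  (∀ x : En n, ‖x‖ < 1 → xn x > peval P x + K * (xpn x) ^ ((m : ℝ) + α) → x ∈ Ω) ∧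
  (∀ x : En n, ‖x‖ < 1 → xn x < peval P x - K * (xpn x) ^ ((m : ℝ) + α) → x ∉ Ω)

/-- `∂Ω ∈ C^{1,α}(0)` with constant `K` (the degree-one polynomial is necessarily `0`). -/
def Domain1α (α K : ℝ) (Ω : Set (En n)) : Prop :=
  (∀ x : En n, ‖x‖ < 1 → xn x > K * (xpn x) ^ ((1 : ℝ) + α) → x ∈ Ω) ∧
  (∀ x : En n, ‖x‖ < 1 → xn x < -(K * (xpn x) ^ ((1 : ℝ) + α)) → x ∉ Ω)

/-- `[∂Ω∩B₁]_{C^{0,1}(0)} ≤ δ`. -/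
def DomainLip (δ : ℝ) (Ω : Set (En n)) : Prop :=
  (∀ x : En n, ‖x‖ < 1 → xn x > δ * xpn x → x ∈ Ω) ∧
  (∀ x : En n, ‖x‖ < 1 → xn x < -(δ * xpn x) → x ∉ Ω)

/-- `osc_{B₁} ∂Ω ≤ δ`. -/
def FrontierOscLe (Ω : Set (En n)) (δ : ℝ) : Prop :=
  ∀ x ∈ frontier Ω ∩ ball (0 : En n) 1, ∀ y ∈ frontier Ω ∩ ball (0 : En n) 1,
    xn x - xn y ≤ δ

/-- The `L^n` norm of `f` on a set `S ⊆ ℝⁿ`. -/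
def LnNorm (n : ℕ) (S : Set (En n)) (f : En n → ℝ) : ℝ :=
  (∫ x in S, |f x| ^ (n : ℝ)) ^ ((n : ℝ)⁻¹)

/-- `∂Ω` is `C^{m,α}` at the point `x₀` with constants `K, r₀`: after an isometric change of
coordinates `φ` taking `x₀` to `0`, the boundary is trapped between `P_Ω(x′) ± K|x′|^{m+α}`. -/
def BoundaryPtCmα (m : ℕ) (α K r₀ : ℝ) (Ω : Set (En n)) (x₀ : En n) : Prop :=
  ∃ (φ : En n ≃ᵢ En n) (P : MvPolynomial (Fin n) ℝ), φ x₀ = 0 ∧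
    P.totalDegree ≤ m ∧ MvPolynomial.coeff 0 P = 0 ∧
    MvPolynomial.pderiv (lastIdx n) P = 0 ∧
    (1 ≤ m → ∀ i, MvPolynomial.coeff (Finsupp.single i 1) P = 0) ∧
    (∀ y : En n, ‖y‖ < r₀ → xn y > peval P y + K * (xpn y) ^ ((m : ℝ) + α) → φ.symm y ∈ Ω) ∧
    (∀ y : En n, ‖y‖ < r₀ → xn y < peval P y - K * (xpn y) ^ ((m : ℝ) + α) → φ.symm y ∉ Ω)

/-- `∂Ω ∩ B₁ ∈ C^{m,α}`: pointwise `C^{m,α}` with constants uniform on compact subsets. -/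
def BoundaryCmα (m : ℕ) (α : ℝ) (Ω : Set (En n)) : Prop :=
  ∀ S : Set (En n), IsCompact S → S ⊆ frontier Ω ∩ ball (0 : En n) 1 →
    ∃ K r₀ : ℝ, 0 ≤ K ∧ 0 < r₀ ∧ ∀ x₀ ∈ S, BoundaryPtCmα m α K r₀ Ω x₀

/-- `∂Ω ∩ B₁ ∈ C^∞`. -/
def BoundarySmooth (Ω : Set (En n)) : Prop :=
  ∀ m : ℕ, 1 ≤ m → ∀ α : ℝ, 0 < α → α ≤ 1 → BoundaryCmα m α Ω

/-- `u ∈ C^∞(Ω̄ ∩ B₁)`: near every point of `Ω̄ ∩ B₁`, `u` agrees on `Ω` with a globally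
smooth function. -/
def SmoothUpToBoundary (Ω : Set (En n)) (u : En n → ℝ) : Prop :=
  ∀ x₀ ∈ closure Ω ∩ ball (0 : En n) 1, ∃ ε : ℝ, 0 < ε ∧ ∃ v : En n → ℝ,
    ContDiff ℝ (⊤ : ℕ∞) v ∧ ∀ x ∈ Ω ∩ ball x₀ ε, v x = u x


theorem second_deriv_le {f : ℝ → ℝ} {a k m c : ℝ}
    (hmax : IsLocalMax (fun t => f t - (a + t * k + t ^ 2 * m)) 0)
    (hd : ∀ᶠ t in nhds (0:ℝ), DifferentiableAt ℝ f t)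
    (hc : HasDerivAt (deriv f) c 0) : c ≤ 2 * m := by
  by_contra hlt
  push Not at hlt
  set h : ℝ → ℝ := fun t => f t - (a + t * k + t ^ 2 * m) with hh
  have hp : ∀ t : ℝ, HasDerivAt (fun t : ℝ => a + t * k + t ^ 2 * m) (k + 2 * t * m) t := by
    intro t
    have h1 := ((hasDerivAt_id t).mul_const k).const_add a
    have h2 := ((hasDerivAt_id t).pow 2).mul_const m
    refine (h1.add h2).congr_deriv ?_
    simp
  have hde : deriv h =ᶠ[nhds 0] fun t => deriv f t - (k + 2 * t * m) := by
    filter_upwards [hd] with t ht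
    exact (ht.hasDerivAt.sub (hp t)).deriv
  have hd2 : HasDerivAt (deriv h) (c - 2 * m) 0 := by
    have h1 : HasDerivAt (fun t : ℝ => k + 2 * t * m) (2 * m) 0 := by
      have := ((((hasDerivAt_id (0:ℝ)).const_mul 2)).mul_const m).const_add k
      refine this.congr_deriv ?_
      simp
    exact (hc.sub h1).congr_of_eventuallyEq hde
  have h0 : deriv h 0 = 0 := hmax.deriv_eq_zero
  have hcont : ContinuousAt h 0 := (hd.self_of_nhds.hasDerivAt.sub (hp 0)).continuousAt
  have hmin := isLocalMin_of_deriv_deriv_pos (f := h) (x₀ := 0) (by rw [hd2.deriv]; linarith) h0 hcont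
  have hconst : h =ᶠ[nhds 0] fun _ => h 0 := by
    filter_upwards [hmin, hmax] with t h1 h2
    exact le_antisymm h2 h1
  have h3 : deriv h =ᶠ[nhds 0] fun _ => 0 := by
    have := hconst.deriv
    refine this.trans ?_
    simp
  have h4 := h3.deriv_eq
  rw [hd2.deriv] at h4
  simp at h4
  linarith

theorem lapAt_le {m : ℕ} [NeZero m] {w φ : En m → ℝ} {x₀ : En m} (k M : Fin m → ℝ)
    (hφ : ∀ i (t : ℝ), φ (x₀ + t • EuclideanSpace.single i 1) = φ x₀ + t * k i + t ^ 2 * M i)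
    (hmax : IsLocalMax (fun x => w x - φ x) x₀)
    (hd : ∀ᶠ x in nhds x₀, DifferentiableAt ℝ w x)
    (hd2 : DifferentiableAt ℝ (fderiv ℝ w) x₀) : lapAt w x₀ ≤ ∑ i, 2 * M i := by
  unfold lapAt
  refine Finset.sum_le_sum fun i _ => ?_
  set e : En m := EuclideanSpace.single i 1 with he
  have hl : ∀ t : ℝ, HasDerivAt (fun t : ℝ => x₀ + t • e) e t := by
    intro t
    have := ((hasDerivAt_id t).smul_const e).const_add x₀
    simpa using this
  have hlc : Filter.Tendsto (fun t : ℝ => x₀ + t • e) (nhds 0) (nhds x₀) := by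
    have := (hl 0).continuousAt.tendsto
    simpa using this
  refine second_deriv_le (f := fun t : ℝ => w (x₀ + t • e)) (a := φ x₀) (k := k i) ?_ ?_ ?_
  · have := hlc.eventually hmax
    refine this.mono ?_
    intro t ht
    have h5 := hφ i t
    rw [← he] at h5
    simp only [h5] at ht ⊢
    simpa using ht
  · filter_upwards [hlc.eventually hd] with t ht
    exact ht.comp t (hl t).differentiableAt
  · have h1 : deriv (fun t : ℝ => w (x₀ + t • e)) =ᶠ[nhds 0] fun t => fderiv ℝ w (x₀ + t • e) e := by
      filter_upwards [hlc.eventually hd] with t ht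
      exact (ht.hasFDerivAt.comp_hasDerivAt t (hl t)).deriv
    refine HasDerivAt.congr_of_eventuallyEq ?_ h1
    have h2 : HasFDerivAt (fderiv ℝ w) (fderiv ℝ (fderiv ℝ w) x₀) (x₀ + (0:ℝ) • e) := by
      simpa using hd2.hasFDerivAt
    have h3 := h2.comp_hasDerivAt (0:ℝ) (hl 0)
    exact h3.clm_apply (hasDerivAt_const (0:ℝ) e) |>.congr_deriv (by simp)

theorem grad_eq {m : ℕ} [NeZero m] {w φ : En m → ℝ} {x₀ : En m} (k M : ℝ) (e : En m)
    (hφ : ∀ (t : ℝ), φ (x₀ + t • e) = φ x₀ + t * k + t ^ 2 * M)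
    (hmax : IsLocalMax (fun x => w x - φ x) x₀)
    (hd : HasFDerivAt w (0 : En m →L[ℝ] ℝ) x₀) : k = 0 := by
  have hl : HasDerivAt (fun t : ℝ => x₀ + t • e) e 0 := by
    have := ((hasDerivAt_id (0:ℝ)).smul_const e).const_add x₀
    simpa using this
  have hlc : Filter.Tendsto (fun t : ℝ => x₀ + t • e) (nhds 0) (nhds x₀) := by
    have := hl.continuousAt.tendsto
    simpa using this
  have hd' : HasFDerivAt w (0 : En m →L[ℝ] ℝ) (x₀ + (0:ℝ) • e) := by simpa using hd
  have h1 := hd'.comp_hasDerivAt (0:ℝ) hl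
  have hp : HasDerivAt (fun t : ℝ => φ x₀ + t * k + t ^ 2 * M) k 0 := by
    have h1 := ((hasDerivAt_id (0:ℝ)).mul_const k).const_add (φ x₀)
    have h2 := ((hasDerivAt_id (0:ℝ)).pow 2).mul_const M
    refine (h1.add h2).congr_deriv ?_
    simp
  have hm : IsLocalMax (fun t : ℝ => w (x₀ + t • e) - (φ x₀ + t * k + t ^ 2 * M)) 0 := by
    refine (hlc.eventually hmax).mono ?_
    intro t ht
    simp only [hφ t] at ht ⊢
    simpa using ht
  have := hm.hasDerivAt_eq_zero (h1.sub hp)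
  simpa using this

theorem quad_rep {m : ℕ} (P : MvPolynomial (Fin m) ℝ) (hP : P.totalDegree ≤ 2) :
    ∃ (a : ℝ) (L : En m →L[ℝ] ℝ) (B : En m →L[ℝ] En m →L[ℝ] ℝ),
      ∀ x, peval P x = a + L x + B x x := by
  have key : ∀ s : Finset (Fin m →₀ ℕ), s ⊆ P.support →
      ∃ (a : ℝ) (L : En m →L[ℝ] ℝ) (B : En m →L[ℝ] En m →L[ℝ] ℝ),
      ∀ x, peval (∑ d ∈ s, monomial d (coeff d P)) x = a + L x + B x x := by
    intro s
    induction s using Finset.induction_on with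
    | empty => intro _; exact ⟨0, 0, 0, fun x => by simp [peval]⟩
    | insert d s hd ih =>
      intro hs
      obtain ⟨a, L, B, h⟩ := ih (fun x hx => hs (Finset.mem_insert_of_mem hx))
      have hdeg : d.toMultiset.card ≤ 2 := by
        rw [Finsupp.card_toMultiset]
        exact (le_totalDegree (hs (Finset.mem_insert_self d s))).trans hP
      have : ∃ (a : ℝ) (L : En m →L[ℝ] ℝ) (B : En m →L[ℝ] En m →L[ℝ] ℝ),
          ∀ x, peval (monomial d (coeff d P)) x = a + L x + B x x := by
        have hx : ∀ x : En m, peval (monomial d (coeff d P)) x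
            = coeff d P * (d.toMultiset.map (fun i => x i)).prod := by
          intro x
          unfold peval
          rw [eval_monomial, Finsupp.toMultiset_map, Finsupp.prod_toMultiset,
            Finsupp.prod_mapDomain_index (by simp) (by intros; ring)]
        interval_cases hc : d.toMultiset.card
        · rw [Multiset.card_eq_zero] at hc
          refine ⟨coeff d P, 0, 0, fun x => ?_⟩
          rw [hx, hc]; simp
        · obtain ⟨i, hi⟩ := Multiset.card_eq_one.1 hc
          refine ⟨0, coeff d P • EuclideanSpace.proj i, 0, fun x => ?_⟩
          rw [hx, hi]; simp
        · obtain ⟨i, j, hi⟩ := Multiset.card_eq_two.1 hc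
          refine ⟨0, 0, coeff d P • (EuclideanSpace.proj i : En m →L[ℝ] ℝ).smulRight
            (EuclideanSpace.proj j : En m →L[ℝ] ℝ), fun x => ?_⟩
          rw [hx, hi]; simp
      obtain ⟨a', L', B', h'⟩ := this
      refine ⟨a' + a, L' + L, B' + B, fun x => ?_⟩
      rw [Finset.sum_insert hd]
      have : peval (monomial d (coeff d P) + ∑ d ∈ s, monomial d (coeff d P)) x
        = peval (monomial d (coeff d P)) x + peval (∑ d ∈ s, monomial d (coeff d P)) x := by
        simp [peval]
      rw [this, h, h']
      simp; ring
  have := key P.support subset_rfl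
  rwa [← P.as_sum] at this

theorem first_exit {m : ℕ} {U : Set (En m)} (hU : IsOpen U) {y x₀ : En m} (hy : y ∈ U)
    (hx : x₀ ∉ U) : ∃ t : ℝ, 0 < t ∧ t ≤ 1 ∧ y + t • (x₀ - y) ∉ U ∧
      y + t • (x₀ - y) ∈ closure U ∧ ∀ s, 0 ≤ s → s < t → y + s • (x₀ - y) ∈ U := by
  have hc : Continuous (fun t : ℝ => y + t • (x₀ - y)) := by fun_prop
  have hcpt : IsCompact (Icc (0:ℝ) 1 ∩ (fun t : ℝ => y + t • (x₀ - y)) ⁻¹' Uᶜ) :=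
    isCompact_Icc.inter_right (hU.isClosed_compl.preimage hc)
  obtain ⟨t, ht, hmin⟩ := hcpt.exists_isLeast ⟨1, by simp, by simpa using hx⟩
  have ht0 : 0 < t := by
    rcases ht.1.1.lt_or_eq with h | h
    · exact h
    · exfalso
      apply ht.2
      simpa [← h] using hy
  have hin : ∀ s, 0 ≤ s → s < t → y + s • (x₀ - y) ∈ U := by
    intro s hs hst
    by_contra h
    have := hmin ⟨⟨hs, hst.le.trans ht.1.2⟩, h⟩
    linarith
  refine ⟨t, ht0, ht.1.2, ht.2, ?_, hin⟩
  have h1 : t ∈ closure (Ico 0 t) := by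
    rw [closure_Ico ht0.ne]; exact ⟨ht0.le, le_rfl⟩
  exact map_mem_closure (f := fun t : ℝ => y + t • (x₀ - y)) hc h1 (fun s hs => hin s hs.1 hs.2)

theorem ext_deriv {m : ℕ} [NeZero m] {Ω : Set (En m)} {u : En m → ℝ} {Du : En m → En m}
    (hΩo : IsOpen Ω)
    (hu : ContinuousOn u (closure Ω ∩ ball 0 1))
    (hDu : ContinuousOn Du (closure Ω ∩ ball 0 1))
    (heq : ∀ x ∈ Ω ∩ ball (0 : En m) 1,
      DifferentiableAt ℝ u x ∧
      (∀ i, fderiv ℝ u x (EuclideanSpace.single i 1) = Du x i))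
    (hbd : ∀ x ∈ frontier Ω ∩ ball (0 : En m) 1, u x = 0 ∧ Du x = 0)
    {x₀ : En m} (hx0 : x₀ ∈ ball (0 : En m) 1) (hx : x₀ ∉ Ω) :
    HasFDerivAt (Ω.indicator u) (0 : En m →L[ℝ] ℝ) x₀ := by
  by_cases hcl : x₀ ∈ closure Ω
  swap
  · have : Ω.indicator u =ᶠ[nhds x₀] fun _ => 0 := by
      filter_upwards [isClosed_closure.isOpen_compl.mem_nhds hcl] with y hy
      exact indicator_of_notMem (fun h => hy (subset_closure h)) _
    exact (hasFDerivAt_const (0:ℝ) x₀).congr_of_eventuallyEq this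
  have hfr : ∀ z, z ∈ closure Ω → z ∉ Ω → z ∈ frontier Ω := by
    intro z h1 h2
    rw [frontier, hΩo.interior_eq]; exact ⟨h1, h2⟩
  have hnorm : ∀ x ∈ Ω ∩ ball (0 : En m) 1, ∀ v, |fderiv ℝ u x v| ≤ ‖Du x‖ * ‖v‖ := by
    intro x hx v
    have : fderiv ℝ u x v = inner ℝ (Du x) v := by
      have hv : v = ∑ i, v i • EuclideanSpace.single i (1:ℝ) := by
        ext j
        simp [Finset.sum_apply, Pi.single_apply]
      conv_lhs => rw [hv]
      rw [map_sum, PiLp.inner_apply]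
      refine Finset.sum_congr rfl fun i _ => ?_
      rw [map_smul, (heq x hx).2 i]
      simp
    rw [this]
    exact abs_real_inner_le_norm _ _
  have hDx : Du x₀ = 0 := (hbd x₀ ⟨hfr x₀ hcl hx, hx0⟩).2
  rw [hasFDerivAt_iff_isLittleO, Asymptotics.isLittleO_iff]
  intro ε hε
  have hc := hDu x₀ ⟨hcl, hx0⟩
  rw [Metric.continuousWithinAt_iff] at hc
  obtain ⟨δ, hδ, hc⟩ := hc ε hε
  obtain ⟨δ', hδ', hb⟩ := Metric.mem_nhds_iff.1 (isOpen_ball.mem_nhds hx0)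
  filter_upwards [Metric.ball_mem_nhds x₀ hδ, Metric.ball_mem_nhds x₀ hδ'] with y hy1 hy2
  rw [indicator_of_notMem hx]
  by_cases hy : y ∈ Ω
  swap
  · rw [indicator_of_notMem hy]; simp; positivity
  rw [indicator_of_mem hy]
  simp only [sub_zero, zero_apply]
  obtain ⟨t, ht0, ht1, hz, hzc, hin⟩ := first_exit hΩo hy hx
  have hball : ∀ s : ℝ, 0 ≤ s → s ≤ 1 → ∀ δ, y ∈ ball x₀ δ → y + s • (x₀ - y) ∈ ball x₀ δ := by
    intro s hs hs1 δ hyδ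
    have : y + s • (x₀ - y) - x₀ = (1 - s) • (y - x₀) := by module
    rw [mem_ball, dist_eq_norm] at hyδ ⊢
    rw [this, norm_smul, Real.norm_eq_abs, abs_of_nonneg (by linarith)]
    nlinarith [norm_nonneg (y - x₀)]
  have hl : ∀ s : ℝ, HasDerivAt (fun s : ℝ => y + s • (x₀ - y)) (x₀ - y) s := by
    intro s
    have := ((hasDerivAt_id s).smul_const (x₀ - y)).const_add y
    simpa using this
  obtain ⟨c, hc1, hc2⟩ := exists_hasDerivAt_eq_slope (fun s : ℝ => u (y + s • (x₀ - y)))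
    (fun s => fderiv ℝ u (y + s • (x₀ - y)) (x₀ - y)) ht0 (by
      refine hu.comp (t := closure Ω ∩ ball 0 1) (by fun_prop) ?_
      intro s hs
      refine ⟨?_, hb (hball s hs.1 (hs.2.trans ht1) _ hy2)⟩
      rcases hs.2.lt_or_eq with h | h
      · exact subset_closure (hin s hs.1 h)
      · rw [h]; exact hzc) (by
      intro s hs
      have hd := (heq _ ⟨hin s hs.1.le hs.2, hb (hball s hs.1.le (hs.2.le.trans ht1) _ hy2)⟩).1
      exact hd.hasFDerivAt.comp_hasDerivAt s (hl s))
  have hmem : y + c • (x₀ - y) ∈ Ω ∩ ball 0 1 :=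
    ⟨hin c hc1.1.le hc1.2, hb (hball c hc1.1.le (hc1.2.le.trans ht1) _ hy2)⟩
  have hz0 : u (y + t • (x₀ - y)) = 0 :=
    (hbd _ ⟨hfr _ hzc hz, hb (hball t ht0.le ht1 _ hy2)⟩).1
  have h1 := hnorm _ hmem (x₀ - y)
  have h2 := hc ⟨subset_closure hmem.1, hmem.2⟩ (hball c hc1.1.le (hc1.2.le.trans ht1) _ hy1)
  rw [hDx, dist_zero_right] at h2
  simp only [hz0, zero_smul, add_zero, sub_zero, zero_sub] at hc2
  rw [eq_div_iff ht0.ne'] at hc2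
  have h3 : |u y| = |fderiv ℝ u (y + c • (x₀ - y)) (x₀ - y)| * t := by
    rw [← abs_neg (u y), ← hc2, abs_mul, abs_of_pos ht0]
  rw [Real.norm_eq_abs, h3, norm_sub_rev y x₀]
  have h4 : |fderiv ℝ u (y + c • (x₀ - y)) (x₀ - y)| ≤ ε * ‖x₀ - y‖ :=
    h1.trans (by gcongr)
  have h5 : 0 ≤ ε * ‖x₀ - y‖ := by positivity
  nlinarith

theorem touch {m : ℕ} [NeZero m] {Ω : Set (En m)} {w : En m → ℝ} {lam : ℝ}
    (hin : ∀ x ∈ Ω ∩ ball (0 : En m) 1, (∀ᶠ y in nhds x, DifferentiableAt ℝ w y) ∧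
      DifferentiableAt ℝ (fderiv ℝ w) x ∧ lapAt w x = lam)
    (hout : ∀ x ∈ ball (0 : En m) 1, x ∉ Ω → HasFDerivAt w (0 : En m →L[ℝ] ℝ) x)
    {q : En m} {R A B D : ℝ} (hR : 0 < R) (hb : closedBall q R ⊆ ball 0 1)
    (hs : ∀ x ∈ sphere q R, w x - (A * xn x + B * xn x ^ 2 + D * ‖x - q‖ ^ 2)
      < w q - (A * xn q + B * xn q ^ 2)) :
    lam ≤ 2 * B + 2 * m * D ∨ ∃ x ∈ ball q R, x ∉ Ω ∧
      A + 2 * B * xn x + 2 * D * (xn x - xn q) = 0 := by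
  have hwd : ∀ x ∈ ball (0 : En m) 1, DifferentiableAt ℝ w x := by
    intro x hx
    by_cases h : x ∈ Ω
    · exact (hin x ⟨h, hx⟩).1.self_of_nhds
    · exact (hout x hx h).differentiableAt
  set φ : En m → ℝ := fun x => A * xn x + B * xn x ^ 2 + D * ‖x - q‖ ^ 2 with hφ
  have hφc : Continuous φ := by
    have : Continuous (fun x : En m => xn x) := by unfold xn; fun_prop
    fun_prop
  obtain ⟨x, hx, hmax⟩ := (isCompact_closedBall q R).exists_isLocalMax_mem_open
    (f := fun x => w x - φ x) ball_subset_closedBall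
    (fun y hy => ((hwd y (hb hy)).continuousAt.sub hφc.continuousAt).continuousWithinAt)
    (mem_closedBall_self hR.le) (by
      intro z hz
      rw [closedBall_sdiff_ball] at hz
      have := hs z hz
      simp only [hφ, sub_self, norm_zero]
      simpa using this) isOpen_ball
  have hexp : ∀ i (t : ℝ), φ (x + t • EuclideanSpace.single i 1) = φ x
      + t * ((if i = lastIdx m then A + 2 * B * xn x else 0) + 2 * D * (x i - q i))
      + t ^ 2 * ((if i = lastIdx m then B else 0) + D) := by
    intro i t
    have hn : ‖x + t • EuclideanSpace.single i (1:ℝ) - q‖ ^ 2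
        = ‖x - q‖ ^ 2 + 2 * t * (x i - q i) + t ^ 2 := by
      rw [show x + t • EuclideanSpace.single i (1:ℝ) - q
        = (x - q) + t • EuclideanSpace.single i (1:ℝ) by abel, norm_add_sq_real, norm_smul,
        inner_smul_right, EuclideanSpace.inner_single_right]
      simp
      ring
    simp only [hφ, hn]
    by_cases hi : i = lastIdx m
    · subst hi
      simp [xn]; ring
    · have : xn (x + t • EuclideanSpace.single i (1:ℝ)) = xn x := by
        simp [xn, Ne.symm hi]
      rw [this]; simp [hi]; ring
  by_cases hxΩ : x ∈ Ω
  · left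
    obtain ⟨h1, h2, h3⟩ := hin x ⟨hxΩ, hb (ball_subset_closedBall hx)⟩
    have := lapAt_le _ _ hexp hmax h1 h2
    rw [h3] at this
    refine this.trans (le_of_eq ?_)
    rw [← Finset.mul_sum, Finset.sum_add_distrib]
    simp; ring
  · right
    refine ⟨x, hx, hxΩ, ?_⟩
    have := grad_eq _ _ _ (hexp (lastIdx m)) hmax (hout x (hb (ball_subset_closedBall hx)) hxΩ)
    simpa [xn] using this

theorem xpn_le {m : ℕ} [NeZero m] (x : En m) : xpn x ≤ ‖x‖ := by
  rw [EuclideanSpace.norm_eq, xpn]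
  apply Real.sqrt_le_sqrt
  simp only [Real.norm_eq_abs, sq_abs]
  exact Finset.sum_le_sum_of_subset_of_nonneg (Finset.erase_subset _ _) (fun i _ _ => sq_nonneg _)

theorem xn_le {m : ℕ} [NeZero m] (x : En m) : |xn x| ≤ ‖x‖ := by
  have := PiLp.norm_apply_le x (lastIdx m)
  simpa [xn] using this

theorem blowup {m : ℕ} [NeZero m] {Ω : Set (En m)} {w f : En m → ℝ} {α K KΩ : ℝ}
    (hα0 : 0 < α) (hKΩ : 0 ≤ KΩ) (hdom : Domain1α α KΩ Ω) (hK : 0 ≤ K)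
    (hT : ∀ x ∈ closure Ω ∩ ball (0 : En m) 1, |w x - f x| ≤ K * ‖x‖ ^ ((2 : ℝ) + α))
    {R δ ε : ℝ} (hR : 0 < R) (hδ : 0 < δ) (hε : 0 < ε) :
    ∀ᶠ r in nhdsWithin (0:ℝ) (Ioi 0), 0 < r ∧ ∀ y : En m, ‖y‖ ≤ R → ‖r • y‖ < 1 ∧
      (δ < xn y → r • y ∈ Ω) ∧ (xn y < -δ → r • y ∉ Ω) ∧
      (r • y ∈ closure Ω → |w (r • y) - f (r • y)| ≤ ε * r ^ 2) := by
  have hpow : ∀ C : ℝ, Filter.Tendsto (fun r : ℝ => C * r ^ α) (nhdsWithin 0 (Ioi 0)) (nhds 0) := by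
    intro C
    have h1 : ContinuousAt (fun r : ℝ => C * r ^ α) 0 :=
      (Real.continuousAt_rpow_const 0 α (Or.inr hα0.le)).const_mul C
    have h2 := h1.tendsto
    simp only [Real.zero_rpow hα0.ne', mul_zero] at h2
    exact h2.mono_left nhdsWithin_le_nhds
  have hlin : Filter.Tendsto (fun r : ℝ => r * R) (nhdsWithin 0 (Ioi 0)) (nhds 0) := by
    have h1 : Continuous (fun r : ℝ => r * R) := by fun_prop
    have h2 := h1.tendsto 0
    simp only [zero_mul] at h2
    exact h2.mono_left nhdsWithin_le_nhds
  filter_upwards [self_mem_nhdsWithin, hlin.eventually (gt_mem_nhds one_pos),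
    (hpow (KΩ * R ^ (1 + α))).eventually (gt_mem_nhds hδ),
    (hpow (K * R ^ (2 + α))).eventually (gt_mem_nhds hε)] with r hr h1 h2 h3
  have hr : 0 < r := hr
  refine ⟨hr, fun y hy => ?_⟩
  have hn : ‖r • y‖ ≤ r * R := by
    rw [norm_smul, Real.norm_eq_abs, abs_of_pos hr]; gcongr
  have hn1 : ‖r • y‖ < 1 := hn.trans_lt h1
  have hxn : xn (r • y) = r * xn y := by simp [xn]
  have hle : KΩ * xpn (r • y) ^ (1 + α) ≤ r * δ := by
    have hx0 : 0 ≤ xpn (r • y) := Real.sqrt_nonneg _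
    calc KΩ * xpn (r • y) ^ (1 + α) ≤ KΩ * (r * R) ^ (1 + α) := by
          gcongr; exact (xpn_le _).trans hn
      _ = r * (KΩ * R ^ (1 + α) * r ^ α) := by
          rw [Real.mul_rpow hr.le hR.le, Real.rpow_add hr, Real.rpow_one]; ring
      _ ≤ r * δ := by gcongr
  refine ⟨hn1, ?_, ?_, ?_⟩
  · intro h
    apply hdom.1 _ hn1
    rw [hxn]
    exact lt_of_le_of_lt hle (by gcongr)
  · intro h
    apply hdom.2 _ hn1
    rw [hxn]
    nlinarith
  · intro h
    refine (hT _ ⟨h, by simpa using hn1⟩).trans ?_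
    calc K * ‖r • y‖ ^ (2 + α) ≤ K * (r * R) ^ (2 + α) := by gcongr
      _ = r ^ 2 * (K * R ^ (2 + α) * r ^ α) := by
          rw [Real.mul_rpow hr.le hR.le, Real.rpow_add hr, Real.rpow_two]; ring
      _ ≤ r ^ 2 * ε := by gcongr
      _ = ε * r ^ 2 := by ring

def Blow {m : ℕ} [NeZero m] (Ω : Set (En m)) (w f : En m → ℝ) : Prop :=
  ∀ R δ ε : ℝ, 0 < R → 0 < δ → 0 < ε →
    ∀ᶠ r in nhdsWithin (0:ℝ) (Ioi 0), 0 < r ∧ ∀ y : En m, ‖y‖ ≤ R → ‖r • y‖ < 1 ∧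
      (δ < xn y → r • y ∈ Ω) ∧ (xn y < -δ → r • y ∉ Ω) ∧
      (r • y ∈ closure Ω → |w (r • y) - f (r • y)| ≤ ε * r ^ 2)

theorem lower_zero {m : ℕ} [NeZero m] {Ω : Set (En m)} {w f : En m → ℝ}
    (hb : Blow Ω w f) (hw0 : w 0 = 0) (hwd : HasFDerivAt w (0 : En m →L[ℝ] ℝ) 0)
    {a : ℝ} {L : En m →L[ℝ] ℝ} {B : En m →L[ℝ] En m →L[ℝ] ℝ}
    (hf : ∀ x, f x = a + L x + B x x) : a = 0 ∧ L = 0 := by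
  have main : ∀ y : En m, 0 < xn y → a = 0 ∧ L y = 0 := by
    intro y hy
    have hev := hb (‖y‖ + 1) (xn y / 2) 1 (by positivity) (by positivity) one_pos
    set d : ℝ → ℝ := fun r => w (r • y) - (a + r * L y + r ^ 2 * B y y) with hd
    have hdb : ∀ᶠ r in nhdsWithin (0:ℝ) (Ioi 0), |d r| ≤ r ^ 2 := by
      filter_upwards [hev] with r hr
      obtain ⟨hr0, hr⟩ := hr
      obtain ⟨-, h1, -, h2⟩ := hr y (by linarith)
      have := h2 (subset_closure (h1 (by linarith)))
      rw [hf] at this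
      simp only [map_smul, smul_apply, smul_eq_mul, one_mul] at this
      simp only [hd]
      convert this using 3
      ring
    have hl : HasDerivAt (fun r : ℝ => r • y) y 0 := by
      simpa using (hasDerivAt_id (0:ℝ)).smul_const y
    have hwd' : HasFDerivAt w (0 : En m →L[ℝ] ℝ) ((0:ℝ) • y) := by simpa using hwd
    have h1 := hwd'.comp_hasDerivAt (0:ℝ) hl
    have hp : HasDerivAt (fun t : ℝ => a + t * L y + t ^ 2 * B y y) (L y) 0 := by
      have h1 := ((hasDerivAt_id (0:ℝ)).mul_const (L y)).const_add a
      have h2 := ((hasDerivAt_id (0:ℝ)).pow 2).mul_const (B y y)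
      refine (h1.add h2).congr_deriv ?_
      simp
    have hdd : HasDerivAt d (-L y) 0 := by
      refine (h1.sub hp).congr_deriv ?_
      simp
    have hd0 : d 0 = -a := by simp [hd, hw0]
    have ha : a = 0 := by
      have t1 : Filter.Tendsto (fun r => |d r|) (nhdsWithin (0:ℝ) (Ioi 0)) (nhds |d 0|) :=
        (hdd.continuousAt.tendsto.mono_left nhdsWithin_le_nhds).abs
      have t2 : Filter.Tendsto (fun r : ℝ => r ^ 2) (nhdsWithin (0:ℝ) (Ioi 0)) (nhds 0) := by
        have : Continuous (fun r : ℝ => r ^ 2) := by fun_prop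
        have := this.tendsto 0
        simp only [ne_eq, OfNat.ofNat_ne_zero, not_false_eq_true, zero_pow] at this
        exact this.mono_left nhdsWithin_le_nhds
      have := le_of_tendsto_of_tendsto t1 t2 hdb
      rw [hd0, abs_neg] at this
      exact abs_nonpos_iff.1 this
    refine ⟨ha, ?_⟩
    have hs := hdd.hasDerivWithinAt (s := Ioi 0)
    rw [hasDerivWithinAt_iff_tendsto_slope' (by simp)] at hs
    have t2 : Filter.Tendsto (fun r : ℝ => r) (nhdsWithin (0:ℝ) (Ioi 0)) (nhds 0) :=
      Filter.tendsto_id.mono_left nhdsWithin_le_nhds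
    have := le_of_tendsto_of_tendsto hs.abs t2 (by
      filter_upwards [hdb, self_mem_nhdsWithin] with r hr hr0
      have hr0 : 0 < r := hr0
      rw [slope_def_field, hd0, ha]
      simp only [neg_zero, sub_zero]
      rw [abs_div, abs_of_pos hr0, div_le_iff₀ hr0]
      nlinarith)
    rw [abs_neg] at this
    exact abs_nonpos_iff.1 this
  have he : xn (EuclideanSpace.single (lastIdx m) (1:ℝ)) = 1 := by simp [xn]
  refine ⟨(main (EuclideanSpace.single (lastIdx m) 1) (by rw [he]; norm_num)).1, ?_⟩
  ext v
  have h1 := (main (EuclideanSpace.single (lastIdx m) 1) (by rw [he]; norm_num)).2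
  have h2 := (main (v + (|xn v| + 1) • EuclideanSpace.single (lastIdx m) 1) (by
    have : xn (v + (|xn v| + 1) • EuclideanSpace.single (lastIdx m) 1) = xn v + (|xn v| + 1) := by
      simp [xn]
    rw [this]; linarith [neg_abs_le (xn v)])).2
  rw [map_add, map_smul, h1] at h2
  simpa using h2

theorem stepB {m : ℕ} [NeZero m] {Ω : Set (En m)} {w f : En m → ℝ} (hΩo : IsOpen Ω)
    (hb : Blow Ω w f) (hw : ∀ x, x ∉ Ω → w x = 0)
    {B : En m →L[ℝ] En m →L[ℝ] ℝ} (hf : ∀ x, f x = B x x) (p : En m) (hp : xn p = 0) :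
    B p p = 0 := by
  by_contra hne
  set e : En m := EuclideanSpace.single (lastIdx m) 1 with he
  have hxe : ∀ s : ℝ, xn (p + s • e) = s := by
    intro s; simp [xn, he]; exact hp
  have hne' : ‖e‖ = 1 := by simp [he]
  set η := |B p p| / 2 with hη
  have hη0 : 0 < η := by positivity
  have hc : Continuous (fun s : ℝ => B (p + s • e) (p + s • e)) := by fun_prop
  obtain ⟨δ, hδ, hcδ⟩ := Metric.continuousAt_iff.1 (hc.continuousAt (x := 0)) η hη0
  set δ' := δ / 2 with hδ'
  have hδ0 : 0 < δ' := by positivity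
  obtain ⟨r, hr, hr2⟩ := (hb (‖p‖ + δ') (δ' / 2) (η / 2) (by positivity) (by positivity)
    (by positivity)).exists
  have hbd : ∀ s : ℝ, |s| ≤ δ' → ‖p + s • e‖ ≤ ‖p‖ + δ' := by
    intro s hs
    refine (norm_add_le _ _).trans ?_
    rw [norm_smul, hne', mul_one, Real.norm_eq_abs]; linarith
  have h1 := (hr2 (p + δ' • e) (hbd _ (by rw [abs_of_pos hδ0]))).2.1 (by rw [hxe]; linarith)
  have h2 := (hr2 (p + (-δ') • e) (hbd _ (by rw [abs_neg, abs_of_pos hδ0]))).2.2.1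
    (by rw [hxe]; linarith)
  obtain ⟨t, ht0, ht1, hz, hzc, -⟩ := first_exit hΩo h1 h2
  have hzz : r • (p + δ' • e) + t • (r • (p + (-δ') • e) - r • (p + δ' • e))
      = r • (p + (δ' - 2 * t * δ') • e) := by module
  rw [hzz] at hz hzc
  have habs : |δ' - 2 * t * δ'| ≤ δ' := by rw [abs_le]; constructor <;> nlinarith
  have h3 := (hr2 _ (hbd _ habs)).2.2.2 hzc
  rw [hw _ hz, hf] at h3
  simp only [map_smul, smul_apply, smul_eq_mul, zero_sub, abs_neg] at h3
  have h4 := @hcδ (δ' - 2 * t * δ') (by rw [Real.dist_eq, sub_zero]; linarith)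
  rw [Real.dist_eq] at h4
  simp only [zero_smul, add_zero] at h4
  have hr20 : 0 < r ^ 2 := by positivity
  rw [← mul_assoc, ← sq, abs_mul, abs_of_pos hr20, mul_comm] at h3
  have h5 := le_of_mul_le_mul_right h3 hr20
  have h6 := abs_sub_abs_le_abs_sub (B p p) (B (p + (δ' - 2 * t * δ') • e) (p + (δ' - 2 * t * δ') • e))
  rw [abs_sub_comm] at h6
  linarith

theorem sphere_scale {m : ℕ} {r ρ : ℝ} (hr : 0 < r) {p x : En m} (hx : dist x (r • p) ≤ r * ρ) :
    ∃ y, x = r • y ∧ ‖y - p‖ ≤ ρ ∧ ‖x - r • p‖ = r * ‖y - p‖ := by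
  have h1 : x = r • (r⁻¹ • x) := by rw [smul_smul, mul_inv_cancel₀ hr.ne', one_smul]
  have h2 : ‖x - r • p‖ = r * ‖r⁻¹ • x - p‖ := by
    conv_lhs => rw [h1, ← smul_sub, norm_smul, Real.norm_eq_abs, abs_of_pos hr]
  refine ⟨r⁻¹ • x, h1, ?_, h2⟩
  rw [dist_eq_norm, h2] at hx
  exact le_of_mul_le_mul_left hx hr

theorem stepC {m : ℕ} [NeZero m] {Ω : Set (En m)} {w f : En m → ℝ}
    (hb : Blow Ω w f) (hw : ∀ x, x ∉ Ω → w x = 0)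
    (hin : ∀ x ∈ Ω ∩ ball (0 : En m) 1, (∀ᶠ y in nhds x, DifferentiableAt ℝ w y) ∧
      DifferentiableAt ℝ (fderiv ℝ w) x ∧ lapAt w x = 1)
    (hout : ∀ x ∈ ball (0 : En m) 1, x ∉ Ω → HasFDerivAt w (0 : En m →L[ℝ] ℝ) x)
    {M : En m →L[ℝ] ℝ} (hf : ∀ x, f x = xn x * M x) (p : En m) (hp : xn p = 0) :
    M p = 0 := by
  suffices H : ∀ p : En m, xn p = 0 → M p ≠ -1 by
    by_contra hne
    refine H ((-(M p)⁻¹) • p) ?_ ?_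
    · have : xn ((-(M p)⁻¹) • p) = (-(M p)⁻¹) * xn p := by simp [xn]
      rw [this, hp, mul_zero]
    · rw [map_smul, smul_eq_mul, neg_mul, inv_mul_cancel₀ hne]
  clear hp p
  intro p hp hMp
  have hm1 : (1:ℝ) ≤ m := by exact_mod_cast Nat.one_le_iff_ne_zero.2 (NeZero.ne m)
  obtain ⟨ρ, hρ0, hρ1, hρ2⟩ : ∃ ρ : ℝ, 0 < ρ ∧ m * ρ ≤ 1 / 8 ∧ ‖M‖ * ρ ≤ 1 / 2 := by
    refine ⟨min (1 / (8 * m)) (1 / (2 * (‖M‖ + 1))), by positivity, ?_, ?_⟩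
    · calc m * min (1 / (8 * (m:ℝ))) (1 / (2 * (‖M‖ + 1))) ≤ m * (1 / (8 * (m:ℝ))) := by
            gcongr; exact min_le_left _ _
        _ = 1 / 8 := by field_simp
    · calc ‖M‖ * min (1 / (8 * (m:ℝ))) (1 / (2 * (‖M‖ + 1))) ≤ (‖M‖ + 1) * (1 / (2 * (‖M‖ + 1))) := by
            gcongr
            · linarith
            · exact min_le_right _ _
        _ = 1 / 2 := by field_simp
  have hρ3 : ρ ≤ 1 / 8 := by nlinarith
  obtain ⟨r, hr, hr2⟩ := (hb (‖p‖ + ρ) (ρ ^ 2 / 8) (ρ ^ 2 / 4) (by positivity) (by positivity)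
    (by positivity)).exists
  have hyR : ∀ y : En m, ‖y - p‖ ≤ ρ → ‖y‖ ≤ ‖p‖ + ρ := by
    intro y hy
    have := norm_le_norm_add_norm_sub' y p
    linarith
  have hyn : ∀ y : En m, ‖y - p‖ ≤ ρ → |xn y| ≤ ρ := by
    intro y hy
    have h1 := xn_le (y - p)
    have h2 : xn (y - p) = xn y := by
      have : xn (y - p) = xn y - xn p := by simp [xn]
      rw [this, hp, sub_zero]
    rw [h2] at h1
    exact h1.trans hy
  have hyM : ∀ y : En m, ‖y - p‖ ≤ ρ → |M y + 1| ≤ 1 / 2 := by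
    intro y hy
    have h1 := M.le_opNorm (y - p)
    rw [map_sub, hMp, Real.norm_eq_abs, sub_neg_eq_add] at h1
    refine h1.trans (le_trans ?_ hρ2)
    gcongr
  have hxs : ∀ y : En m, xn (r • y) = r * xn y := fun y => by simp [xn]
  have hfs : ∀ y : En m, f (r • y) = r ^ 2 * (xn y * M y) := by
    intro y; rw [hf, hxs, map_smul, smul_eq_mul]; ring
  have hr20 : 0 < r ^ 2 := by positivity
  have key := touch hin hout (q := r • p) (R := r * ρ) (A := -(r / 4)) (B := -m) (D := 1)
    (by positivity) (by
      intro x hx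
      obtain ⟨y, rfl, hy, -⟩ := sphere_scale hr hx
      simpa using (hr2 y (hyR y hy)).1) (by
      intro x hx
      obtain ⟨y, rfl, hy, hy2⟩ := sphere_scale hr (le_of_eq hx)
      have hsy : ‖r • y - r • p‖ = r * ρ := by rw [← dist_eq_norm]; exact hx
      obtain ⟨-, g1, g2, g3⟩ := hr2 y (hyR y hy)
      have hq : -(ρ ^ 2 / 4 * r ^ 2) ≤ w (r • p) := by
        by_cases hq : r • p ∈ Ω
        · have := (hr2 p (by linarith)).2.2.2 (subset_closure hq)
          rw [hfs, hp, zero_mul, mul_zero, sub_zero] at this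
          exact (abs_le.1 this).1
        · rw [hw _ hq]; nlinarith [sq_nonneg ρ]
      rw [hsy, hxs, hxs, hp]
      have hY := abs_le.1 (hyn y hy)
      have hM := abs_le.1 (hyM y hy)
      set Y := xn y
      -- reduce to scaled inequality
      have hsc : ∀ v : ℝ, v + Y / 4 + m * Y ^ 2 ≤ ρ ^ 2 / 2 → w (r • y) ≤ r ^ 2 * v →
          w (r • y) - (-(r / 4) * (r * Y) + -(m:ℝ) * (r * Y) ^ 2 + 1 * (r * ρ) ^ 2) <
          w (r • p) - (-(r / 4) * (r * 0) + -(m:ℝ) * (r * 0) ^ 2) := by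
        intro v hv hwv
        have h1 := mul_le_mul_of_nonneg_left hv hr20.le
        have h2 : 0 < r ^ 2 * ρ ^ 2 := by positivity
        nlinarith
      have hmY : m * Y ^ 2 ≤ |Y| / 8 := by
        rw [← sq_abs, sq, ← mul_assoc]
        have : (m:ℝ) * |Y| ≤ 1 / 8 := (mul_le_mul_of_nonneg_left (hyn y hy) (by positivity)).trans hρ1
        nlinarith [abs_nonneg Y]
      by_cases hy0 : r • y ∈ Ω
      · have h3 := (abs_le.1 (g3 (subset_closure hy0))).2
        rw [hfs] at h3
        refine hsc (Y * M y + ρ ^ 2 / 4) ?_ (by linarith)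
        have hYδ : -(ρ ^ 2 / 8) ≤ Y := by
          by_contra h
          exact g2 (not_le.1 h) hy0
        rcases le_or_gt 0 Y with h | h
        · rw [abs_of_nonneg h] at hmY
          nlinarith [sq_nonneg ρ]
        · rw [abs_of_neg h] at hmY
          nlinarith [sq_nonneg ρ]
      · refine hsc 0 ?_ (by rw [hw _ hy0]; simp)
        have hYδ : Y ≤ ρ ^ 2 / 8 := by
          by_contra h
          exact hy0 (g1 (not_le.1 h))
        rcases le_or_gt 0 Y with h | h
        · rw [abs_of_nonneg h] at hmY
          nlinarith [sq_nonneg ρ]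
        · rw [abs_of_neg h] at hmY
          nlinarith [sq_nonneg ρ])
  rcases key with h | ⟨x, hx, -, h⟩
  · linarith
  · obtain ⟨y, rfl, hy, -⟩ := sphere_scale hr (le_of_lt hx)
    rw [hxs, hxs, hp] at h
    have hY := abs_le.1 (hyn y hy)
    have h2 : r * (-(1 / 4) - 2 * (m - 1) * xn y) = 0 := by linarith
    have h3 := (mul_eq_zero.1 h2).resolve_left hr.ne'
    nlinarith

theorem stepA {m : ℕ} [NeZero m] {Ω : Set (En m)} {w f : En m → ℝ} {lam c : ℝ}
    (hb : Blow Ω w f)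
    (hin : ∀ x ∈ Ω ∩ ball (0 : En m) 1, (∀ᶠ y in nhds x, DifferentiableAt ℝ w y) ∧
      DifferentiableAt ℝ (fderiv ℝ w) x ∧ lapAt w x = lam)
    (hout : ∀ x ∈ ball (0 : En m) 1, x ∉ Ω → HasFDerivAt w (0 : En m →L[ℝ] ℝ) x)
    (hf : ∀ x, f x = c * xn x ^ 2) : lam ≤ 2 * c := by
  have hm1 : (1:ℝ) ≤ m := by exact_mod_cast Nat.one_le_iff_ne_zero.2 (NeZero.ne m)
  suffices H : ∀ D : ℝ, 0 < D → lam ≤ 2 * c + 2 * m * D by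
    by_contra hlt
    push Not at hlt
    have := H ((lam - 2 * c) / (4 * m)) (by apply div_pos <;> linarith)
    have h2 : 2 * m * ((lam - 2 * c) / (4 * m)) = (lam - 2 * c) / 2 := by field_simp; ring
    linarith
  intro D hD
  set e : En m := EuclideanSpace.single (lastIdx m) 1 with he
  have hne' : ‖e‖ = 1 := by simp [he]
  have hxe : xn e = 1 := by simp [xn, he]
  obtain ⟨r, hr, hr2⟩ := (hb 2 (1 / 4) (D / 16) (by positivity) (by positivity)
    (by positivity)).exists
  have hxs : ∀ y : En m, xn (r • y) = r * xn y := fun y => by simp [xn]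
  have hyR : ∀ y : En m, ‖y - e‖ ≤ 1 / 2 → ‖y‖ ≤ 2 := by
    intro y hy
    have := norm_le_norm_add_norm_sub' y e
    linarith
  have hyΩ : ∀ y : En m, ‖y - e‖ ≤ 1 / 2 → r • y ∈ Ω := by
    intro y hy
    apply (hr2 y (hyR y hy)).2.1
    have h1 := xn_le (y - e)
    have h2 : xn (y - e) = xn y - xn e := by simp [xn]
    rw [h2, hxe] at h1
    linarith [(abs_le.1 (h1.trans hy)).1]
  have hr20 : 0 < r ^ 2 := by positivity
  have key := touch hin hout (q := r • e) (R := r * (1 / 2)) (A := 0) (B := c) (D := D)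
    (by positivity) (by
      intro x hx
      obtain ⟨y, rfl, hy, -⟩ := sphere_scale hr hx
      simpa using (hr2 y (hyR y hy)).1) (by
      intro x hx
      obtain ⟨y, rfl, hy, hy2⟩ := sphere_scale hr (le_of_eq hx)
      have hsy : ‖r • y - r • e‖ = r * (1 / 2) := by rw [← dist_eq_norm]; exact hx
      have h1 := (abs_le.1 ((hr2 y (hyR y hy)).2.2.2 (subset_closure (hyΩ y hy)))).2
      have h2 := (abs_le.1 ((hr2 e (by linarith)).2.2.2
        (subset_closure (hyΩ e (by simp))))).1
      rw [hf] at h1 h2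
      rw [hsy]
      have : 0 < D * r ^ 2 := by positivity
      nlinarith)
  rcases key with h | ⟨x, hx, hx2, -⟩
  · exact h
  · exfalso
    obtain ⟨y, rfl, hy, -⟩ := sphere_scale hr (le_of_lt hx)
    exact hx2 (hyΩ y hy)

/-- at a free boundary point of the obstacle-type problem (`Δu = 1` in
`Ω∩B₁`, `u = |Du| = 0` on `∂Ω∩B₁`, `∂Ω ∈ C^{1,α}(0)`), the second-order Taylor polynomial of
`u` at `0` is `x_n²/2`. -/
theorem stmt_16 (n : ℕ) [NeZero n] (hn : 2 ≤ n) (α : ℝ) (hα0 : 0 < α) (hα1 : α < 1)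
    (Ω : Set (En n)) (u : En n → ℝ) (Du : En n → En n)
    (P₂ : MvPolynomial (Fin n) ℝ) (K KΩ : ℝ)
    (hΩo : IsOpen Ω) (hΩc : IsConnected Ω) (hΩb : IsBounded Ω)
    (h0 : (0 : En n) ∈ frontier Ω)
    -- `∂Ω ∈ C^{1,α}(0)`
    (hKΩ : 0 ≤ KΩ) (hdom : Domain1α α KΩ Ω)
    -- `u` is continuous on `Ω̄ ∩ B₁` and `C¹` up to `∂Ω ∩ B₁`, with gradient `Du`
    (hu : ContinuousOn u (closure Ω ∩ ball 0 1))
    (hDu : ContinuousOn Du (closure Ω ∩ ball 0 1))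
    -- `Δu = 1` in `Ω ∩ B₁`
    (heq : ∀ x ∈ Ω ∩ ball (0 : En n) 1,
      DifferentiableAt ℝ u x ∧
      (∀ i, fderiv ℝ u x (EuclideanSpace.single i 1) = Du x i) ∧
      DifferentiableAt ℝ (fderiv ℝ u) x ∧ lapAt u x = 1)
    -- `u = |Du| = 0` on `∂Ω ∩ B₁`
    (hbd : ∀ x ∈ frontier Ω ∩ ball (0 : En n) 1, u x = 0 ∧ Du x = 0)
    -- `u ∈ C^{2,α}(0)` with polynomial `P₂`
    (hP₂ : P₂.totalDegree ≤ 2)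
    (hK : 0 ≤ K)
    (htaylor : ∀ x ∈ Ω ∩ ball (0 : En n) 1,
      |u x - peval P₂ x| ≤ K * ‖x‖ ^ ((2 : ℝ) + α)) :
    P₂ = MvPolynomial.C (1 / 2 : ℝ) * MvPolynomial.X (lastIdx n) ^ 2 := by
  have hfr : ∀ z, z ∈ closure Ω → z ∉ Ω → z ∈ frontier Ω := by
    intro z h1 h2
    rw [frontier, hΩo.interior_eq]; exact ⟨h1, h2⟩
  have h0Ω : (0 : En n) ∉ Ω := by
    rw [frontier, hΩo.interior_eq] at h0; exact h0.2
  have h0b : (0 : En n) ∈ ball (0 : En n) 1 := by simp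
  set w : En n → ℝ := Ω.indicator u with hwdef
  have hw : ∀ x, x ∉ Ω → w x = 0 := fun x hx => indicator_of_notMem hx _
  have hwu : ∀ x ∈ Ω, w =ᶠ[nhds x] u := by
    intro x hx
    filter_upwards [hΩo.mem_nhds hx] with y hy
    exact indicator_of_mem hy _
  have hout : ∀ x ∈ ball (0 : En n) 1, x ∉ Ω → HasFDerivAt w (0 : En n →L[ℝ] ℝ) x :=
    fun x hx hxΩ => ext_deriv hΩo hu hDu (fun y hy => ⟨(heq y hy).1, (heq y hy).2.1⟩) hbd hx hxΩ
  have hin : ∀ x ∈ Ω ∩ ball (0 : En n) 1, (∀ᶠ y in nhds x, DifferentiableAt ℝ w y) ∧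
      DifferentiableAt ℝ (fderiv ℝ w) x ∧ lapAt w x = 1 := by
    intro x hx
    obtain ⟨h1, h2, h3, h4⟩ := heq x hx
    have hfd : fderiv ℝ w =ᶠ[nhds x] fderiv ℝ u := (hwu x hx.1).fderiv
    refine ⟨?_, h3.congr_of_eventuallyEq hfd, ?_⟩
    · filter_upwards [(hΩo.inter isOpen_ball).mem_nhds hx] with y hy
      exact (heq y hy).1.congr_of_eventuallyEq (hwu y hy.1)
    · rw [← h4]
      unfold lapAt
      rw [hfd.fderiv_eq]
  have hwc : ∀ x ∈ ball (0 : En n) 1, ContinuousAt w x := by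
    intro x hx
    by_cases h : x ∈ Ω
    · exact (hin x ⟨h, hx⟩).1.self_of_nhds.continuousAt
    · exact (hout x hx h).continuousAt
  obtain ⟨a, L, B, hrep⟩ := quad_rep P₂ hP₂
  have hT : ∀ x ∈ closure Ω ∩ ball (0 : En n) 1,
      |w x - peval P₂ x| ≤ K * ‖x‖ ^ ((2 : ℝ) + α) := by
    intro x hx
    have hcl : x ∈ closure (ball (0 : En n) 1 ∩ Ω) := isOpen_ball.inter_closure ⟨hx.2, hx.1⟩
    have hpc : Continuous (fun x => peval P₂ x) := by
      simp only [hrep]; fun_prop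
    refine ContinuousWithinAt.closure_le (f := fun x => |w x - peval P₂ x|)
      (g := fun x => K * ‖x‖ ^ ((2 : ℝ) + α)) hcl
      ((hwc x hx.2).sub hpc.continuousAt).abs.continuousWithinAt ?_ ?_
    · have : Continuous (fun x : En n => K * ‖x‖ ^ ((2 : ℝ) + α)) :=
        continuous_const.mul (continuous_norm.rpow_const (fun _ => Or.inr (by linarith)))
      exact this.continuousWithinAt
    · intro y hy
      have := htaylor y ⟨hy.2, hy.1⟩
      simp only [hwdef, indicator_of_mem hy.2]
      exact this
  have hblow : Blow Ω w (peval P₂) := fun R δ ε hR hδ hε =>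
    blowup hα0 hKΩ hdom hK hT hR hδ hε
  obtain ⟨ha, hL⟩ := lower_zero hblow (hw 0 h0Ω) (hout 0 h0b h0Ω) hrep
  have hf1 : ∀ x, peval P₂ x = B x x := by
    intro x; rw [hrep, ha, hL]; simp
  have hB := stepB hΩo hblow hw hf1
  set e : En n := EuclideanSpace.single (lastIdx n) 1 with he
  have hxe : xn e = 1 := by simp [xn, he]
  have hproj : ∀ x : En n, (EuclideanSpace.proj (lastIdx n) : En n →L[ℝ] ℝ) x = xn x := fun x => rfl
  have hdec : ∀ x : En n, xn (x - xn x • e) = 0 := by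
    intro x; simp [xn, he]
  set M : En n →L[ℝ] ℝ := B.flip e + B e - (B e e) • (EuclideanSpace.proj (lastIdx n)) with hM
  have hMx : ∀ x, M x = B x e + B e x - B e e * xn x := by
    intro x
    simp only [hM, sub_apply, add_apply, smul_apply, ContinuousLinearMap.flip_apply, hproj,
      smul_eq_mul]
  have hf2 : ∀ x, peval P₂ x = xn x * M x := by
    intro x
    rw [hf1, hMx]
    have := hB _ (hdec x)
    simp only [map_sub, map_smul, sub_apply, smul_apply, smul_eq_mul] at this
    linarith
  have hM0 := stepC hblow hw hin hout hf2
  have hf3 : ∀ x, peval P₂ x = M e * xn x ^ 2 := by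
    intro x
    have := hM0 _ (hdec x)
    rw [map_sub, map_smul, smul_eq_mul, sub_eq_zero] at this
    rw [hf2, this]; ring
  have hA1 := stepA hblow hin hout hf3
  have hblow' : Blow Ω (fun x => -w x) (fun x => -peval P₂ x) := by
    intro R δ ε hR hδ hε
    filter_upwards [hblow R δ ε hR hδ hε] with r hr
    refine ⟨hr.1, fun y hy => ?_⟩
    obtain ⟨g1, g2, g3, g4⟩ := hr.2 y hy
    refine ⟨g1, g2, g3, fun h => ?_⟩
    have := g4 h
    rw [← abs_neg] at this
    convert this using 2
    ring
  have hfn : fderiv ℝ (fun x => -w x) = fun x => -fderiv ℝ w x := by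
    ext1 x; exact fderiv_fun_neg
  have hA2 := stepA (lam := -1) (c := -M e) hblow' (by
    intro x hx
    obtain ⟨g1, g2, g3⟩ := hin x hx
    refine ⟨g1.mono fun y hy => hy.neg, ?_, ?_⟩
    · rw [hfn]; exact g2.neg
    · rw [← g3]
      unfold lapAt
      rw [hfn, fderiv_fun_neg]
      simp) (by
    intro x hx hxΩ
    exact (hout x hx hxΩ).neg.congr_fderiv neg_zero) (by
    intro x
    simp only [hf3]; ring)
  have hMe : M e = 1 / 2 := by linarith
  apply MvPolynomial.funext
  intro x
  have := hf3 (WithLp.toLp 2 x)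
  rw [hMe] at this
  simpa [peval, xn] using this
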